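/- arXiv:0806.3522 — 4 statements merged into one kernel-verified Lean document; each statement's English description precedes it below -/
import Mathlib

section
/- For every a ∈ 𝔤 there exists a unique smooth curve α : ℝ → 𝔤, defined on all of ℝ, satisfying α'(t) = -D_{α(t)} α(t) for all t and α(0) = a; that is, the geodesic flow of the Riemannian Lie algebra (𝔤, ⟨·,·⟩) is complete. -/
open scoped InnerProductSpace

/-!
By the Koszul formula each `D u` is skew-adjoint, so the geodesic vector field `x ↦ -D x x` is
orthogonal to `x` and geodesics stay on spheres around `0`. Precomposing the field with a radial
retraction onto a ball makes it bounded and globally Lipschitz without losing the orthogonality;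
its integral curves therefore exist for all time, and never leave the ball on which the field was
left unchanged.
-/

open Set Metric

section GlobalExistence

variable {E : Type*} [NormedAddCommGroup E] [NormedSpace ℝ E]

lemma exists_isIntegralCurve_of_forall_isIntegralCurveOn_Ioo {v : ℝ → E → E} {K : NNReal}
    (hv : ∀ t, LipschitzWith K (v t)) {x : E}
    (h : ∀ T > 0, ∃ γ : ℝ → E, γ 0 = x ∧ IsIntegralCurveOn γ v (Ioo (-T) T)) :
    ∃ γ : ℝ → E, γ 0 = x ∧ IsIntegralCurve γ v := by
  choose! γ γ_zero γ_curve using h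
  have γ_deriv : ∀ T > 0, ∀ t ∈ Ioo (-T) T, HasDerivAt (γ T) (v t (γ T t)) t := fun T hT t ht ↦
    (γ_curve T hT t ht).hasDerivAt (Ioo_mem_nhds ht.1 ht.2)
  have agree : ∀ S > 0, ∀ T, S ≤ T → EqOn (γ S) (γ T) (Ioo (-S) S) := by
    intro S hS T hST
    have hT : 0 < T := hS.trans_le hST
    exact ODE_solution_unique_of_mem_Ioo (s := fun _ ↦ univ)
      (fun t _ ↦ (hv t).lipschitzOnWith) ⟨neg_lt_zero.2 hS, hS⟩
      (fun t ht ↦ ⟨γ_deriv S hS t ht, mem_univ _⟩)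
      (fun t ht ↦ ⟨γ_deriv T hT t (Ioo_subset_Ioo (neg_le_neg hST) hST ht), mem_univ _⟩)
      ((γ_zero S hS).trans (γ_zero T hT).symm)
  refine ⟨fun t ↦ γ (|t| + 1) t, γ_zero _ (by positivity), fun t ↦ ?_⟩
  have glued : ∀ s ∈ Ioo (-(|t| + 1)) (|t| + 1), γ (|s| + 1) s = γ (|t| + 1) s := by
    intro s hs
    rcases le_total |s| |t| with hst | hts
    · exact agree _ (by positivity) _ (by gcongr) (abs_lt.1 (lt_add_one |s|))
    · exact (agree _ (by positivity) _ (by gcongr) hs).symm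
  have ht : t ∈ Ioo (-(|t| + 1)) (|t| + 1) := abs_lt.1 (lt_add_one |t|)
  exact (γ_deriv _ (by positivity) t ht).congr_of_eventuallyEq
    (Filter.eventually_of_mem (Ioo_mem_nhds ht.1 ht.2) glued)

lemma exists_isIntegralCurve_of_lipschitzWith_of_isBounded [CompleteSpace E]
    {v : E → E} {K : NNReal} (hv : LipschitzWith K v) (hbdd : Bornology.IsBounded (range v))
    (x : E) :
    ∃ γ : ℝ → E, γ 0 = x ∧ IsIntegralCurve γ fun _ ↦ v := by
  refine exists_isIntegralCurve_of_forall_isIntegralCurveOn_Ioo (fun _ ↦ hv) fun T hT ↦ ?_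
  obtain ⟨C, hC, hvC⟩ := hbdd.exists_pos_norm_le
  lift C to NNReal using hC.le
  lift T to NNReal using hT.le
  have hpl : IsPicardLindelof (fun _ ↦ v)
      (⟨0, neg_nonpos.2 T.2, T.2⟩ : Icc (-T : ℝ) T) x (C * T) 0 C K :=
    .of_time_independent (fun y _ ↦ hvC _ (mem_range_self y)) hv.lipschitzOnWith (by simp)
  obtain ⟨γ, γ_zero, hγ⟩ := hpl.exists_eq_forall_mem_Icc_hasDerivWithinAt₀
  exact ⟨γ, γ_zero, IsIntegralCurveOn.mono hγ Ioo_subset_Icc_self⟩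

end GlobalExistence

section BallRetraction

variable {E : Type*} [NormedAddCommGroup E] [NormedSpace ℝ E]

/-- The radial retraction of a normed space onto the closed ball of radius `R > 0` around `0`,
used to extend vector fields from that ball. For `‖x‖ ≤ R` the factor is `R / R = 1`. -/
noncomputable def ballRetraction (R : ℝ) (x : E) : E := (R / max ‖x‖ R) • x

variable {R : ℝ}

lemma ballRetraction_of_norm_le (hR : 0 < R) {x : E} (hx : ‖x‖ ≤ R) :
    ballRetraction R x = x := by
  rw [ballRetraction, max_eq_right hx, div_self hR.ne', one_smul]

lemma ballRetraction_mem_closedBall (hR : 0 < R) (x : E) :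
    ballRetraction R x ∈ closedBall 0 R := by
  have hm : 0 < max ‖x‖ R := lt_max_of_lt_right hR
  rw [mem_closedBall_zero_iff, ballRetraction, norm_smul, Real.norm_of_nonneg (by positivity),
    div_mul_eq_mul_div, div_le_iff₀ hm]
  gcongr
  exact le_max_left _ _

lemma lipschitzWith_ballRetraction (hR : 0 < R) :
    LipschitzWith 2 (ballRetraction R : E → E) := by
  refine LipschitzWith.of_dist_le_mul fun x y ↦ ?_
  set m := max ‖x‖ R
  set n := max ‖y‖ R
  have hm : 0 < m := lt_max_of_lt_right hR
  have hn : 0 < n := lt_max_of_lt_right hR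
  have hRm : R / m ≤ 1 := div_le_one_of_le₀ (le_max_right _ _) hm.le
  have hyn : ‖y‖ / n ≤ 1 := div_le_one_of_le₀ (le_max_left _ _) hn.le
  have hnm : |n - m| ≤ ‖x - y‖ := by
    rw [norm_sub_rev]
    exact (abs_max_sub_max_le_abs _ _ R).trans (abs_norm_sub_norm_le y x)
  have split : ballRetraction R x - ballRetraction R y
      = (R / m) • (x - y) + (R / m * ((n - m) / n)) • y := by
    have : R / m * ((n - m) / n) = R / m - R / n := by field_simp
    rw [this, ballRetraction, ballRetraction]
    module
  calc dist (ballRetraction R x) (ballRetraction R y)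
      ≤ ‖(R / m) • (x - y)‖ + ‖(R / m * ((n - m) / n)) • y‖ := by
        rw [dist_eq_norm, split]
        exact norm_add_le _ _
    _ = R / m * ‖x - y‖ + R / m * |n - m| * (‖y‖ / n) := by
        rw [norm_smul, norm_smul, norm_mul, norm_div, norm_div, Real.norm_of_nonneg hR.le,
          Real.norm_of_nonneg hm.le, Real.norm_of_nonneg hn.le, Real.norm_eq_abs]
        ring
    _ ≤ 1 * ‖x - y‖ + 1 * ‖x - y‖ * 1 := by gcongr
    _ = (2 : NNReal) * dist x y := by
        rw [dist_eq_norm, NNReal.coe_ofNat]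
        ring

end BallRetraction

section TangentToSpheres

variable {E : Type*} [NormedAddCommGroup E] [InnerProductSpace ℝ E]

lemma norm_eq_of_isIntegralCurve_of_inner_eq_zero {v : ℝ → E → E} {γ : ℝ → E}
    (hγ : IsIntegralCurve γ v) (horth : ∀ t x, ⟪x, v t x⟫_ℝ = 0) (s t : ℝ) : ‖γ s‖ = ‖γ t‖ := by
  have deriv_norm_sq : ∀ t, HasDerivAt (fun s ↦ ‖γ s‖ ^ 2) 0 t := fun t ↦ by
    simpa only [horth, mul_zero] using (hγ t).norm_sq
  have norm_sq_eq : ‖γ s‖ ^ 2 = ‖γ t‖ ^ 2 :=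
    is_const_of_deriv_eq_zero (fun t ↦ (deriv_norm_sq t).differentiableAt)
      (fun t ↦ (deriv_norm_sq t).deriv) s t
  exact (sq_eq_sq₀ (norm_nonneg _) (norm_nonneg _)).1 norm_sq_eq

lemma inner_comp_ballRetraction_eq_zero {v : E → E} (horth : ∀ x, ⟪x, v x⟫_ℝ = 0) {R : ℝ}
    (hR : 0 < R) (x : E) : ⟪x, v (ballRetraction R x)⟫_ℝ = 0 := by
  have hc : R / max ‖x‖ R ≠ 0 := (div_pos hR (lt_max_of_lt_right hR)).ne'
  have h := horth (ballRetraction R x)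
  nth_rw 1 [ballRetraction] at h
  rw [real_inner_smul_left] at h
  exact (mul_eq_zero.1 h).resolve_left hc

variable {v : E → E}

theorem exists_isIntegralCurve_of_inner_eq_zero [CompleteSpace E]
    (hlip : ∀ R, ∃ K, LipschitzOnWith K v (closedBall 0 R)) (horth : ∀ x, ⟪x, v x⟫_ℝ = 0) (a : E) :
    ∃ γ : ℝ → E, γ 0 = a ∧ IsIntegralCurve γ fun _ ↦ v := by
  obtain ⟨R, hR, haR⟩ : ∃ R, 0 < R ∧ ‖a‖ ≤ R := ⟨‖a‖ + 1, by positivity, by linarith⟩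
  obtain ⟨K, hK⟩ := hlip R
  have mem_ball : ∀ x : E, ballRetraction R x ∈ closedBall 0 R :=
    ballRetraction_mem_closedBall hR
  have lip : LipschitzWith (K * 2) (v ∘ ballRetraction R) :=
    lipschitzOnWith_univ.1 <|
      hK.comp (lipschitzWith_ballRetraction hR).lipschitzOnWith fun x _ ↦ mem_ball x
  have bdd : Bornology.IsBounded (range (v ∘ ballRetraction R)) := by
    refine isBounded_range_iff.2 ⟨K * (R + R), fun x y ↦ ?_⟩
    refine (hK.dist_le_mul _ (mem_ball x) _ (mem_ball y)).trans ?_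
    gcongr
    exact (dist_triangle_right _ _ 0).trans (add_le_add (mem_ball x) (mem_ball y))
  obtain ⟨γ, γ_zero, hγ⟩ := exists_isIntegralCurve_of_lipschitzWith_of_isBounded lip bdd a
  have norm_le : ∀ t, ‖γ t‖ ≤ R := fun t ↦ by
    rwa [norm_eq_of_isIntegralCurve_of_inner_eq_zero hγ
      (fun _ ↦ inner_comp_ballRetraction_eq_zero horth hR) t 0, γ_zero]
  refine ⟨γ, γ_zero, fun t ↦ ?_⟩
  simpa only [Function.comp_apply, ballRetraction_of_norm_le hR (norm_le t)] using hγ t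

theorem isIntegralCurve_unique_of_inner_eq_zero
    (hlip : ∀ R, ∃ K, LipschitzOnWith K v (closedBall 0 R)) (horth : ∀ x, ⟪x, v x⟫_ℝ = 0)
    {β γ : ℝ → E} (hβ : IsIntegralCurve β fun _ ↦ v) (hγ : IsIntegralCurve γ fun _ ↦ v) {t₀ : ℝ}
    (h : β t₀ = γ t₀) : β = γ := by
  obtain ⟨K, hK⟩ := hlip ‖γ t₀‖
  have mem_ball : ∀ {α : ℝ → E}, IsIntegralCurve α (fun _ ↦ v) → α t₀ = γ t₀ →
      ∀ t, α t ∈ closedBall 0 ‖γ t₀‖ := fun {α} hα hα₀ t ↦ by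
    rw [mem_closedBall_zero_iff, ← hα₀]
    exact (norm_eq_of_isIntegralCurve_of_inner_eq_zero hα (fun _ ↦ horth) t t₀).le
  exact ODE_solution_unique_univ (fun _ ↦ hK) (fun t ↦ ⟨hβ t, mem_ball hβ h t⟩)
    (fun t ↦ ⟨hγ t, mem_ball hγ rfl t⟩) h

end TangentToSpheres

lemma exists_lipschitzOnWith_closedBall_apply_self {E F : Type*} [NormedAddCommGroup E]
    [NormedSpace ℝ E] [NormedAddCommGroup F] [NormedSpace ℝ F] (B : E →L[ℝ] E →L[ℝ] F) (R : ℝ) :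
    ∃ K, LipschitzOnWith K (fun x ↦ B x x) (closedBall 0 R) := by
  refine ⟨(2 * ‖B‖ * R).toNNReal, LipschitzOnWith.of_dist_le' fun x hx y hy ↦ ?_⟩
  rw [mem_closedBall_zero_iff] at hx hy
  have split : B x x - B y y = B (x - y) x + B y (x - y) := by
    simp only [map_sub, sub_apply]
    abel
  calc dist (B x x) (B y y)
      ≤ ‖B (x - y) x‖ + ‖B y (x - y)‖ := by
        rw [dist_eq_norm, split]
        exact norm_add_le _ _
    _ ≤ ‖B‖ * ‖x - y‖ * R + ‖B‖ * R * ‖x - y‖ :=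
        add_le_add (B.le_of_opNorm₂_le_of_le le_rfl le_rfl hx)
          (B.le_of_opNorm₂_le_of_le le_rfl hy le_rfl)
    _ = 2 * ‖B‖ * R * dist x y := by
        rw [dist_eq_norm]
        ring

lemma inner_leviCivita_left_eq_neg {G : Type*} [NormedAddCommGroup G] [InnerProductSpace ℝ G]
    {lie : G →ₗ[ℝ] G →ₗ[ℝ] G} (hlie : lie.IsAlt) {D : G → G → G}
    (hD : ∀ u v w : G,
      2 * ⟪D u v, w⟫_ℝ = ⟪lie u v, w⟫_ℝ + ⟪lie w u, v⟫_ℝ + ⟪lie w v, u⟫_ℝ) (u v w : G) :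
    ⟪D u v, w⟫_ℝ = -⟪v, D u w⟫_ℝ := by
  have huvw := hD u v w
  have huwv := hD u w v
  rw [← hlie.neg u w, ← hlie.neg v w, inner_neg_left, inner_neg_left] at huvw
  rw [← hlie.neg u v, inner_neg_left] at huwv
  rw [real_inner_comm (D u w) v]
  linarith

theorem geodesic_flow_complete_general
    {G : Type*} [NormedAddCommGroup G] [InnerProductSpace ℝ G] [CompleteSpace G]
    (lie : G →ₗ[ℝ] G →ₗ[ℝ] G)
    (hanti : ∀ u : G, lie u u = 0)
    (D : G →L[ℝ] G →L[ℝ] G)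
    (hD : ∀ u v w : G,
      2 * ⟪D u v, w⟫_ℝ = ⟪lie u v, w⟫_ℝ + ⟪lie w u, v⟫_ℝ + ⟪lie w v, u⟫_ℝ) :
    ∀ a : G, ∃! α : ℝ → G,
      (∀ t : ℝ, HasDerivAt α (-(D (α t) (α t))) t) ∧ α 0 = a := by
  intro a
  have horth : ∀ x, ⟪x, -D x x⟫_ℝ = 0 := fun x ↦ by
    have skew : ⟪D x x, x⟫_ℝ = -⟪x, D x x⟫_ℝ := inner_leviCivita_left_eq_neg hanti hD x x x
    rw [inner_neg_right]
    linarith [real_inner_comm x (D x x)]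
  have hlip : ∀ R, ∃ K, LipschitzOnWith K (fun x ↦ -D x x) (closedBall 0 R) :=
    exists_lipschitzOnWith_closedBall_apply_self (-D)
  obtain ⟨γ, γ_zero, hγ⟩ := exists_isIntegralCurve_of_inner_eq_zero hlip horth a
  exact ⟨γ, ⟨hγ, γ_zero⟩, fun β ⟨hβ, β_zero⟩ ↦
    isIntegralCurve_unique_of_inner_eq_zero hlip horth hβ hγ (β_zero.trans γ_zero.symm)⟩

/-- For every `a ∈ 𝔤` there exists a unique smooth curve `α : ℝ → 𝔤`,
defined on all of `ℝ`, satisfying the geodesic equation `α' t = -D (α t) (α t)` for all `t`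
and `α 0 = a`: the geodesic flow of the Riemannian Lie algebra `(𝔤, ⟪·,·⟫)` is complete. -/
theorem geodesic_flow_complete
    {G : Type*} [NormedAddCommGroup G] [InnerProductSpace ℝ G] [FiniteDimensional ℝ G]
    (lie : G →ₗ[ℝ] G →ₗ[ℝ] G)
    (hanti : ∀ u : G, lie u u = 0)
    (hjac : ∀ u v w : G, lie u (lie v w) = lie (lie u v) w + lie v (lie u w))
    (D : G →ₗ[ℝ] G →ₗ[ℝ] G)
    (hD : ∀ u v w : G,
      2 * ⟪D u v, w⟫_ℝ = ⟪lie u v, w⟫_ℝ + ⟪lie w u, v⟫_ℝ + ⟪lie w v, u⟫_ℝ) :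
    ∀ a : G, ∃! α : ℝ → G,
      (∀ t : ℝ, HasDerivAt α (-(D (α t) (α t))) t) ∧ α 0 = a := by
  have : CompleteSpace G := FiniteDimensional.complete ℝ G
  exact geodesic_flow_complete_general lie hanti D.toContinuousBilinearMap hD
end

section
/- For every a ∈ 𝔤: the trace of the linear map v ↦ D_a v is zero, and the trace of the linear map v ↦ D_v a equals -Tr(ad_a), where ad_a(v) = [a,v]. -/
open scoped InnerProductSpace

/-! The Koszul formula says that `D` is metric (each `D a` is skew-adjoint) and torsion-free
(`D u v - D v u = [u, v]`). Mutually adjoint endomorphisms have equal traces, so `Tr (D a) = 0`;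
torsion-freeness reads `D.flip a = D a - ad a`, and taking traces gives the second identity. -/

section CommRing

variable {R M : Type*} [CommRing R] [AddCommGroup M] [Module R M] {B : M →ₗ[R] M →ₗ[R] R}

section Trace

variable [Module.Free R M] [Module.Finite R M] [B.IsPerfPair]

theorem trace_eq_of_isAdjointPair {f g : Module.End R M} (h : LinearMap.IsAdjointPair B B f g) :
    LinearMap.trace R M f = LinearMap.trace R M g := by
  have conj_eq : B.toPerfPair.conj f = Module.Dual.transpose (R := R) g := by
    ext φ y
    simpa [LinearEquiv.conj_apply_apply, Module.Dual.transpose_apply] using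
      h (B.toPerfPair.symm φ) y
  rw [← LinearMap.trace_conj' f B.toPerfPair, conj_eq, LinearMap.trace_transpose']

theorem trace_eq_zero_of_isSkewAdjoint (h2 : IsLeftRegular (2 : R)) {f : Module.End R M}
    (hf : B.IsSkewAdjoint f) : LinearMap.trace R M f = 0 := by
  have trace_eq_neg : LinearMap.trace R M f = -LinearMap.trace R M f := by
    rw [← map_neg]
    exact trace_eq_of_isAdjointPair hf
  apply h2
  linear_combination trace_eq_neg

end Trace

/-- The Koszul formula: `D` is the Levi-Civita product of the bracket `lie` with respect to the
metric `B`. The metric may be any bilinear form, so that pseudo-Riemannian Lie algebras over a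
commutative ring are covered. -/
def IsLeviCivitaProduct (B : M →ₗ[R] M →ₗ[R] R) (lie D : M →ₗ[R] M →ₗ[R] M) : Prop :=
  ∀ u v w, 2 * B (D u v) w = B (lie u v) w + B (lie w u) v + B (lie w v) u

namespace IsLeviCivitaProduct

variable {lie D : M →ₗ[R] M →ₗ[R] M}

theorem isSkewAdjoint (hD : IsLeviCivitaProduct B lie D) (h2 : IsLeftRegular (2 : R))
    (hB : B.IsSymm) (hlie : lie.IsAlt) (a : M) : B.IsSkewAdjoint (D a) := by
  intro v w
  have koszul_add : 2 * B (D a v) w + 2 * B (D a w) v = 0 := by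
    rw [hD, hD, ← hlie.neg a v, ← hlie.neg a w, ← hlie.neg w v]
    simp only [map_neg, LinearMap.neg_apply]
    ring
  have symm : B v (D a w) = B (D a w) v := hB.eq v (D a w)
  apply h2
  simp only [Pi.neg_apply, map_neg]
  linear_combination koszul_add + 2 * symm

theorem sub_eq_lie (hD : IsLeviCivitaProduct B lie D) (h2 : IsLeftRegular (2 : R))
    (hB : Function.Injective B) (hlie : lie.IsAlt) (u v : M) : D u v - D v u = lie u v := by
  apply hB
  ext w
  have neg_lie : -B (lie u v) w = B (lie v u) w := by
    rw [← hlie.neg u v, map_neg, LinearMap.neg_apply]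
  apply h2
  simp only [map_sub, LinearMap.sub_apply]
  linear_combination hD u v w - hD v u w + neg_lie

theorem flip_apply_eq_sub (hD : IsLeviCivitaProduct B lie D) (h2 : IsLeftRegular (2 : R))
    (hB : Function.Injective B) (hlie : lie.IsAlt) (a : M) : D.flip a = D a - lie a := by
  ext v
  rw [LinearMap.flip_apply, LinearMap.sub_apply, ← hD.sub_eq_lie h2 hB hlie, sub_sub_cancel]

end IsLeviCivitaProduct

theorem trace_levi_civita_general [Module.Free R M] [Module.Finite R M] [B.IsPerfPair]
    (h2 : IsLeftRegular (2 : R)) (hB : B.IsSymm) {lie D : M →ₗ[R] M →ₗ[R] M} (hlie : lie.IsAlt)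
    (hD : IsLeviCivitaProduct B lie D) (a : M) :
    LinearMap.trace R M (D a) = 0 ∧
      LinearMap.trace R M (D.flip a) = -LinearMap.trace R M (lie a) := by
  have trace_eq_zero : LinearMap.trace R M (D a) = 0 :=
    trace_eq_zero_of_isSkewAdjoint h2 (hD.isSkewAdjoint h2 hB hlie a)
  refine ⟨trace_eq_zero, ?_⟩
  rw [hD.flip_apply_eq_sub h2 (LinearMap.IsPerfPair.bijective_left B).injective hlie, map_sub,
    trace_eq_zero, zero_sub]

end CommRing

theorem isPerfPair_innerₗ {E : Type*} [NormedAddCommGroup E] [InnerProductSpace ℝ E]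
    [FiniteDimensional ℝ E] : (innerₗ E).IsPerfPair := by
  have injective : Function.Injective (innerₗ E) := fun v w h =>
    ext_inner_right ℝ fun x => LinearMap.congr_fun h x
  exact .of_injective injective (by rwa [flip_innerₗ])

/-- For every `a ∈ 𝔤`: the trace of the linear map `v ↦ D a v` is zero,
and the trace of the linear map `v ↦ D v a` equals `-Tr(ad a)`, where `ad a v = [a, v]`.
Here `D` is the Levi-Civita product of the Riemannian Lie algebra `(𝔤, ⟪·,·⟫)`. -/
theorem trace_levi_civita
    {G : Type*} [NormedAddCommGroup G] [InnerProductSpace ℝ G] [FiniteDimensional ℝ G]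
    (lie : G →ₗ[ℝ] G →ₗ[ℝ] G)
    (hanti : ∀ u : G, lie u u = 0)
    (hjac : ∀ u v w : G, lie u (lie v w) = lie (lie u v) w + lie v (lie u w))
    (D : G →ₗ[ℝ] G →ₗ[ℝ] G)
    (hD : ∀ u v w : G,
      2 * ⟪D u v, w⟫_ℝ = ⟪lie u v, w⟫_ℝ + ⟪lie w u, v⟫_ℝ + ⟪lie w v, u⟫_ℝ) :
    ∀ a : G,
      LinearMap.trace ℝ G (D a) = 0 ∧
      LinearMap.trace ℝ G (D.flip a) = -(LinearMap.trace ℝ G (lie a)) := by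
  have : (innerₗ G).IsPerfPair := isPerfPair_innerₗ
  exact trace_levi_civita_general (IsRegular.of_ne_zero two_ne_zero).left isSymm_inner hanti hD
end

section
/- Let α₀ : [0,1] → 𝔤 be a smooth curve and β₀ : [0,1] → 𝔤 a smooth curve with β₀(0) = β₀(1) = 0. Then there exist smooth maps α, β : ℝ × [0,1] → 𝔤 such that α(0,·) = α₀, β(0,·) = β₀, β(ε,0) = β(ε,1) = 0 for all ε, and Δ(α,β) = 0, i.e. ∂_ε α = ∂_t β + [α,β]; in other words, α is an A-homotopy with fixed end-points starting at α₀ whose transverse variation restricts to β₀ at ε = 0. -/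
open scoped InnerProductSpace

/-- Partial derivative in the second variable `t` of a map `ℝ² → G`. -/
noncomputable def partialT {G : Type*} [NormedAddCommGroup G] [NormedSpace ℝ G]
    (f : ℝ × ℝ → G) (p : ℝ × ℝ) : G :=
  fderiv ℝ f p (0, 1)

/-- Partial derivative in the first variable `ε` of a map `ℝ² → G`. -/
noncomputable def partialE {G : Type*} [NormedAddCommGroup G] [NormedSpace ℝ G]
    (f : ℝ × ℝ → G) (p : ℝ × ℝ) : G :=
  fderiv ℝ f p (1, 0)

/-! The variation can be taken independent of `ε`. The equation for `α` is then, for each fixed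
`t`, the affine ODE `∂_ε x = [x, β₀ t] + β₀' t` with coefficients constant in `ε`, solved by the
exponential of a linear operator. -/

section AffineFlow

open NormedSpace

variable {V E : Type*} [NormedAddCommGroup V] [NormedSpace ℝ V]
  [NormedAddCommGroup E] [NormedSpace ℝ E] {n : WithTop ℕ∞}

/-- The homogenization `(x, s) ↦ (A x + s • b, 0)` of the affine vector field `x ↦ A x + b`. It is
linear, and on the hyperplane `s = 1`, which its flow preserves, it restricts to that field. -/
noncomputable def affineLift (A : V →L[ℝ] V) (b : V) : V × ℝ →L[ℝ] V × ℝ :=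
  .inl ℝ V ℝ ∘L (A ∘L .fst ℝ V ℝ + (ContinuousLinearMap.snd ℝ V ℝ).smulRight b)

@[simp]
theorem affineLift_apply (A : V →L[ℝ] V) (b : V) (y : V × ℝ) :
    affineLift A b y = (A y.1 + y.2 • b, 0) :=
  rfl

theorem contDiff_affineLift {A : E → V →L[ℝ] V} {b : E → V} (hA : ContDiff ℝ n A)
    (hb : ContDiff ℝ n b) : ContDiff ℝ n fun x => affineLift (A x) (b x) :=
  contDiff_const.clm_comp ((hA.clm_comp contDiff_const).add (contDiff_const.smulRight hb))

/-- The time-`ε` flow of the affine vector field `x ↦ A x + b`, applied to `v`. -/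
noncomputable def affineFlow (A : V →L[ℝ] V) (b : V) (ε : ℝ) (v : V) : V :=
  (exp (ε • affineLift A b) (v, (1 : ℝ))).1

@[simp]
theorem affineFlow_zero (A : V →L[ℝ] V) (b v : V) : affineFlow A b 0 v = v := by
  simp [affineFlow]

variable [CompleteSpace V]

theorem contDiff_normedSpace_exp {R : Type*} [NormedRing R] [NormedAlgebra ℝ R]
    [CompleteSpace R] : ContDiff ℝ n (exp : R → R) :=
  contDiff_iff_contDiffAt.2 fun x => (exp_analytic (𝕂 := ℝ) x).contDiffAt

theorem hasDerivAt_exp_smul_apply (A : V →L[ℝ] V) (v : V) (ε : ℝ) :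
    HasDerivAt (fun e : ℝ => exp (e • A) v) (A (exp (ε • A) v)) ε := by
  simpa using (hasDerivAt_exp_smul_const' (𝕂 := ℝ) A ε).clm_apply (hasDerivAt_const ε v)

theorem snd_exp_smul_affineLift (A : V →L[ℝ] V) (b : V) (ε : ℝ) (y : V × ℝ) :
    (exp (ε • affineLift A b) y).2 = y.2 := by
  have hderiv (e : ℝ) : HasDerivAt (fun e : ℝ => (exp (e • affineLift A b) y).2) 0 e :=
    (hasDerivAt_exp_smul_apply (affineLift A b) y e).snd
  simpa using is_const_of_deriv_eq_zero (fun e => (hderiv e).differentiableAt)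
    (fun e => (hderiv e).deriv) ε 0

theorem hasDerivAt_affineFlow (A : V →L[ℝ] V) (b v : V) (ε : ℝ) :
    HasDerivAt (fun e => affineFlow A b e v) (A (affineFlow A b ε v) + b) ε := by
  have hlift := (hasDerivAt_exp_smul_apply (affineLift A b) (v, (1 : ℝ)) ε).fst
  rwa [affineLift_apply, snd_exp_smul_affineLift, one_smul] at hlift

theorem contDiff_affineFlow {A : E → V →L[ℝ] V} {b v : E → V} {τ : E → ℝ}
    (hA : ContDiff ℝ n A) (hb : ContDiff ℝ n b) (hτ : ContDiff ℝ n τ) (hv : ContDiff ℝ n v) :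
    ContDiff ℝ n fun x => affineFlow (A x) (b x) (τ x) (v x) :=
  ((contDiff_normedSpace_exp.comp (hτ.smul (contDiff_affineLift hA hb))).clm_apply
    (hv.prodMk contDiff_const)).fst

end AffineFlow

section Homotopy

variable {G : Type*} [NormedAddCommGroup G] [NormedSpace ℝ G]

theorem partialE_eq_of_hasDerivAt {f : ℝ × ℝ → G} {p : ℝ × ℝ} {f' : G}
    (hf : DifferentiableAt ℝ f p) (hf' : HasDerivAt (fun ε => f (ε, p.2)) f' p.1) :
    partialE f p = f' :=
  (hf.hasFDerivAt.comp_hasDerivAt p.1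
    ((hasDerivAt_id p.1).prodMk (hasDerivAt_const p.1 p.2))).unique hf'

theorem partialT_comp_snd {f : ℝ → G} {p : ℝ × ℝ} (hf : DifferentiableAt ℝ f p.2) :
    partialT (fun q => f q.2) p = deriv f p.2 := by
  have hcomp : HasFDerivAt (fun q : ℝ × ℝ => f q.2)
      (fderiv ℝ f p.2 ∘L ContinuousLinearMap.snd ℝ ℝ ℝ) p :=
    hf.hasFDerivAt.comp p hasFDerivAt_snd
  simp [partialT, hcomp.fderiv]

theorem exists_homotopy_with_given_transverse_variation_general [CompleteSpace G]
    (B : G →L[ℝ] G →L[ℝ] G) {n : WithTop ℕ∞} (hn : n ≠ 0) {α₀ β₀ : ℝ → G}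
    (hα₀ : ContDiff ℝ n α₀) (hβ₀ : ContDiff ℝ (n + 1) β₀) :
    ∃ α β : ℝ × ℝ → G, ContDiff ℝ n α ∧ ContDiff ℝ (n + 1) β ∧
      (∀ t, α (0, t) = α₀ t ∧ β (0, t) = β₀ t) ∧
      (∀ t, β₀ t = 0 → ∀ ε, β (ε, t) = 0) ∧
      (∀ p, partialE α p = partialT β p + B (α p) (β p)) := by
  let α (p : ℝ × ℝ) : G := affineFlow (B.flip (β₀ p.2)) (deriv β₀ p.2) p.1 (α₀ p.2)
  have hB : ContDiff ℝ n fun t => B.flip (β₀ t) :=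
    B.flip.contDiff.comp (hβ₀.of_le le_self_add)
  have hderiv : ContDiff ℝ n (deriv β₀) := (contDiff_succ_iff_deriv.1 hβ₀).2.2
  have hα : ContDiff ℝ n α :=
    contDiff_affineFlow (hB.comp contDiff_snd) (hderiv.comp contDiff_snd) contDiff_fst
      (hα₀.comp contDiff_snd)
  have hode (p : ℝ × ℝ) :
      HasDerivAt (fun ε => α (ε, p.2)) (B (α p) (β₀ p.2) + deriv β₀ p.2) p.1 :=
    hasDerivAt_affineFlow (B.flip (β₀ p.2)) (deriv β₀ p.2) (α₀ p.2) p.1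
  refine ⟨α, fun p => β₀ p.2, hα, hβ₀.comp contDiff_snd,
    fun t => ⟨affineFlow_zero _ _ _, rfl⟩, fun t ht _ => ht, fun p => ?_⟩
  calc partialE α p = B (α p) (β₀ p.2) + deriv β₀ p.2 :=
        partialE_eq_of_hasDerivAt (hα.differentiable hn p) (hode p)
    _ = partialT (fun q => β₀ q.2) p + B (α p) (β₀ p.2) := by
        rw [partialT_comp_snd (hβ₀.differentiable (by simp) p.2), add_comm]

end Homotopy

/-- Let `α₀ : [0,1] → 𝔤` be a smooth curve and `β₀ : [0,1] → 𝔤` a smooth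
curve with `β₀ 0 = β₀ 1 = 0`.  Then there exist smooth maps `α β : ℝ × [0,1] → 𝔤` such that
`α(0,·) = α₀`, `β(0,·) = β₀`, `β(ε,0) = β(ε,1) = 0` for all `ε`, and `Δ(α,β) = 0`, i.e.
`∂_ε α = ∂ₜ β + [α,β]`: `α` is an `A`-homotopy with fixed end-points starting at `α₀`
whose transverse variation restricts to `β₀` at `ε = 0`. -/
theorem exists_homotopy_with_given_transverse_variation
    {G : Type*} [NormedAddCommGroup G] [InnerProductSpace ℝ G] [FiniteDimensional ℝ G]
    (lie : G →ₗ[ℝ] G →ₗ[ℝ] G)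
    (hanti : ∀ u : G, lie u u = 0)
    (hjac : ∀ u v w : G, lie u (lie v w) = lie (lie u v) w + lie v (lie u w))
    (α₀ β₀ : ℝ → G) (hα₀ : ContDiff ℝ (⊤ : ℕ∞) α₀) (hβ₀ : ContDiff ℝ (⊤ : ℕ∞) β₀)
    (hβ₀0 : β₀ 0 = 0) (hβ₀1 : β₀ 1 = 0) :
    ∃ α β : ℝ × ℝ → G, ContDiff ℝ (⊤ : ℕ∞) α ∧ ContDiff ℝ (⊤ : ℕ∞) β ∧
      (∀ t ∈ Set.Icc (0 : ℝ) 1, α (0, t) = α₀ t ∧ β (0, t) = β₀ t) ∧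
      (∀ ε : ℝ, β (ε, 0) = 0 ∧ β (ε, 1) = 0) ∧
      (∀ p : ℝ × ℝ, p.2 ∈ Set.Icc (0 : ℝ) 1 →
        partialE α p = partialT β p + lie (α p) (β p)) := by
  obtain ⟨α, β, hα, hβ, h₀, hend, heq⟩ := exists_homotopy_with_given_transverse_variation_general
    lie.toContinuousBilinearMap (n := (⊤ : ℕ∞)) (by simp) hα₀ hβ₀
  exact ⟨α, β, hα, hβ, fun t _ => h₀ t, fun ε => ⟨hend 0 hβ₀0 ε, hend 1 hβ₀1 ε⟩, fun p _ => heq p⟩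
end

section
/- A smooth curve α₀ : [0,1] → 𝔤 is a geodesic, i.e. α₀'(t) = -D_{α₀(t)} α₀(t) for all t, if and only if it is an h-critical point of the energy: for every pair of smooth maps α, β : ℝ × [0,1] → 𝔤 with α(0,·) = α₀, β(ε,0) = β(ε,1) = 0 for all ε, and Δ(α,β) = 0, the energy E(ε) = (1/2)∫₀¹ ⟨α(ε,t), α(ε,t)⟩ dt satisfies E'(0) = 0. -/
open scoped InnerProductSpace

/-!
The first variation of the energy at `ε = 0` is `∫ ⟪α₀, ∂_ε α⟫`. Substituting
`∂_ε α = ∂_t β + [α₀, β]` and integrating by parts turns it into `-∫ ℓ_t (β(0, t))`, where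
`ℓ_t w = ⟪α₀' t, w⟫ - ⟪α₀ t, [α₀ t, w]⟫`, and the Koszul formula identifies `ℓ_t` with pairing
against `α₀' t + D_{α₀ t} α₀ t`. So geodesics are critical. Conversely, for a test function `b` and
a vector `w`, the homotopy equation with `β(ε, t) = b(t) w` is, for each `t`, a linear differential
equation in `ε`, solved by an exponential; the fundamental lemma of the calculus of variations then
gives `ℓ_t w = 0`.
-/

open MeasureTheory Set
open scoped ContDiff

section PartialDerivatives

variable {E : Type*} [NormedAddCommGroup E] [NormedSpace ℝ E] {f : ℝ × ℝ → E}

theorem hasDerivAt_partialE {e t : ℝ} (hf : DifferentiableAt ℝ f (e, t)) :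
    HasDerivAt (fun e => f (e, t)) (partialE f (e, t)) e :=
  hf.hasFDerivAt.comp_hasDerivAt e ((hasDerivAt_id e).prodMk (hasDerivAt_const e t))

theorem hasDerivAt_partialT {e t : ℝ} (hf : DifferentiableAt ℝ f (e, t)) :
    HasDerivAt (fun t => f (e, t)) (partialT f (e, t)) t :=
  hf.hasFDerivAt.comp_hasDerivAt t ((hasDerivAt_const t e).prodMk (hasDerivAt_id t))

theorem continuous_partialE (hf : ContDiff ℝ 1 f) : Continuous (partialE f) :=
  (hf.continuous_fderiv one_ne_zero).clm_apply continuous_const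

theorem hasDerivAt_integral_partialE (hf : ContDiff ℝ 1 f) (a b e : ℝ) :
    HasDerivAt (fun e => ∫ t in a..b, f (e, t)) (∫ t in a..b, partialE f (e, t)) e := by
  have hfc : Continuous f := hf.continuous
  have hf'c : Continuous (partialE f) := continuous_partialE hf
  obtain ⟨C, hC⟩ := ((isCompact_Icc (a := e - 1) (b := e + 1)).prod
    (isCompact_uIcc (a := a) (b := b))).exists_bound_of_continuousOn hf'c.continuousOn
  refine (intervalIntegral.hasDerivAt_integral_of_dominated_loc_of_deriv_le
    (bound := fun _ => C) (F' := fun e t => partialE f (e, t))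
    (Icc_mem_nhds (sub_one_lt e) (lt_add_one e)) ?_ ?_ ?_ ?_ ?_ ?_).2
  · exact .of_forall fun e' =>
      (by fun_prop : Continuous fun t => f (e', t)).aestronglyMeasurable
  · exact (by fun_prop : Continuous fun t => f (e, t)).intervalIntegrable a b
  · exact (by fun_prop : Continuous fun t => partialE f (e, t)).aestronglyMeasurable
  · exact .of_forall fun t ht e' he' => hC (e', t) ⟨he', uIoc_subset_uIcc ht⟩
  · exact intervalIntegrable_const
  · exact .of_forall fun t _ e' _ => hasDerivAt_partialE (hf.differentiable one_ne_zero _)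

end PartialDerivatives

section CalculusOfVariations

theorem integral_inner_deriv_eq_deriv_inner
    {E : Type*} [NormedAddCommGroup E] [InnerProductSpace ℝ E] {u v : ℝ → E}
    (hu : ContDiff ℝ 1 u) (hv : ContDiff ℝ 1 v) (a b : ℝ) :
    ∫ t in a..b, ⟪u t, deriv v t⟫_ℝ =
      ⟪u b, v b⟫_ℝ - ⟪u a, v a⟫_ℝ - ∫ t in a..b, ⟪deriv u t, v t⟫_ℝ := by
  have huc : Continuous u := hu.continuous
  have hvc : Continuous v := hv.continuous
  have hint : Continuous fun t => ⟪u t, deriv v t⟫_ℝ := by fun_prop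
  have hint' : Continuous fun t => ⟪deriv u t, v t⟫_ℝ := by fun_prop
  rw [eq_sub_iff_add_eq, ← intervalIntegral.integral_add (hint.intervalIntegrable a b)
    (hint'.intervalIntegrable a b)]
  exact intervalIntegral.integral_eq_sub_of_hasDerivAt
    (fun t _ => (hu.differentiable one_ne_zero t).hasDerivAt.inner ℝ
      (hv.differentiable one_ne_zero t).hasDerivAt)
    ((hint.add hint').intervalIntegrable a b)

theorem eqOn_zero_of_integral_contDiff_smul_eq_zero {F : Type*} [NormedAddCommGroup F]
    [NormedSpace ℝ F] [CompleteSpace F] {f : ℝ → F} {a b : ℝ} (hab : a < b)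
    (hf : ContinuousOn f (Icc a b))
    (h : ∀ g : ℝ → ℝ, ContDiff ℝ ∞ g → g a = 0 → g b = 0 → ∫ t in a..b, g t • f t = 0) :
    EqOn f 0 (Icc a b) := by
  have hae : ∀ᵐ t, t ∈ Ioo a b → f t = 0 := by
    refine isOpen_Ioo.ae_eq_zero_of_integral_contDiff_smul_eq_zero
      ((hf.mono Ioo_subset_Icc_self).locallyIntegrableOn measurableSet_Ioo) fun g hg _ hsupp => ?_
    have hg0 : ∀ t ∉ Ioo a b, g t = 0 := fun t ht =>
      image_eq_zero_of_notMem_tsupport fun hmem => ht (hsupp hmem)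
    rw [← h g hg (hg0 a (by simp)) (hg0 b (by simp)), intervalIntegral.integral_of_le hab.le,
      integral_Ioc_eq_integral_Ioo]
    exact (setIntegral_eq_integral_of_forall_compl_eq_zero fun t ht => by
      rw [hg0 t ht, zero_smul]).symm
  have haeIcc : f =ᵐ[volume.restrict (Icc a b)] 0 := by
    rw [← Measure.restrict_congr_set Ioo_ae_eq_Icc]
    exact (ae_restrict_iff' measurableSet_Ioo).2 hae
  exact Measure.eqOn_Icc_of_ae_eq volume hab.ne haeIcc hf continuousOn_const

end CalculusOfVariations

section Homotopy

variable {G : Type*} [NormedAddCommGroup G] [NormedSpace ℝ G] (lie : G →L[ℝ] G →L[ℝ] G)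

/-- The expression `Δ(α, β) = ∂_t β - ∂_ε α + [α, β]`, whose vanishing says that `α` is a homotopy
of `𝔤`-paths with transverse variation `β`. -/
noncomputable def homotopyDefect (α β : ℝ × ℝ → G) (p : ℝ × ℝ) : G :=
  partialT β p - partialE α p + lie (α p) (β p)

/-- The homotopy starting at `α₀` whose transverse variation is `β(ε, t) = b(t) w`: for fixed `t`
it is the solution of `∂_ε α = b'(t) w + b(t) [α, w]` with initial value `α₀ t`, the second term
being a particular solution because `[w, w] = 0`. -/
noncomputable def homotopyAlong (w : G) (b : ℝ → ℝ) (α₀ : ℝ → G) (p : ℝ × ℝ) : G :=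
  NormedSpace.exp ((p.1 * b p.2) • lie.flip w) (α₀ p.2) + (p.1 * deriv b p.2) • w

variable {lie} {w : G} {b : ℝ → ℝ} {α₀ : ℝ → G}

theorem partialE_eq_of_homotopyDefect_eq_zero {α β : ℝ × ℝ → G} {p : ℝ × ℝ}
    (h : homotopyDefect lie α β p = 0) :
    partialE α p = partialT β p + lie (α p) (β p) := by
  rw [eq_comm, ← sub_eq_zero, ← h, homotopyDefect]
  abel

theorem homotopyAlong_zero_left (t : ℝ) : homotopyAlong lie w b α₀ (0, t) = α₀ t := by
  simp [homotopyAlong]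

theorem partialT_smul_const {e t : ℝ} (hb : DifferentiableAt ℝ b t) :
    partialT (fun p : ℝ × ℝ => b p.2 • w) (e, t) = deriv b t • w := by
  have hb₂ : DifferentiableAt ℝ (fun p : ℝ × ℝ => b p.2 • w) (e, t) :=
    (DifferentiableAt.comp (e, t) hb differentiableAt_snd).smul_const w
  exact (hasDerivAt_partialT hb₂).unique (hb.hasDerivAt.smul_const w)

variable [CompleteSpace G]

theorem contDiff_homotopyAlong {n : WithTop ℕ∞} (hb : ContDiff ℝ (n + 1) b)
    (hα₀ : ContDiff ℝ n α₀) : ContDiff ℝ n (homotopyAlong lie w b α₀) := by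
  have hexp : ContDiff ℝ n (NormedSpace.exp : (G →L[ℝ] G) → G →L[ℝ] G) :=
    contDiff_iff_contDiffAt.2 fun L => (NormedSpace.exp_analytic (𝕂 := ℝ) L).contDiffAt
  have hb₀ : ContDiff ℝ n b := hb.of_le le_self_add
  have hb' : ContDiff ℝ n (deriv b) := (contDiff_succ_iff_deriv.1 hb).2.2
  have hflow : ContDiff ℝ n fun p : ℝ × ℝ => NormedSpace.exp ((p.1 * b p.2) • lie.flip w) :=
    hexp.comp ((contDiff_fst.mul (hb₀.comp contDiff_snd)).smul contDiff_const)
  exact (hflow.clm_apply (hα₀.comp contDiff_snd)).add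
    ((contDiff_fst.mul (hb'.comp contDiff_snd)).smul contDiff_const)

theorem hasDerivAt_homotopyAlong (hlie : ∀ u, lie u u = 0) (e t : ℝ) :
    HasDerivAt (fun e => homotopyAlong lie w b α₀ (e, t))
      (deriv b t • w + b t • lie (homotopyAlong lie w b α₀ (e, t)) w) e := by
  have hflow : HasDerivAt (fun s : ℝ => NormedSpace.exp (s • lie.flip w) (α₀ t))
      (lie (NormedSpace.exp ((e * b t) • lie.flip w) (α₀ t)) w) (e * b t) :=
    (hasDerivAt_exp_smul_const' (𝕂 := ℝ) (lie.flip w) (e * b t)).clm_apply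
      (hasDerivAt_const _ (α₀ t)) |>.congr_deriv (by simp)
  refine ((hflow.scomp e (hasDerivAt_mul_const (b t))).add
    ((hasDerivAt_mul_const (deriv b t)).smul_const w)).congr_deriv ?_
  simp [homotopyAlong, hlie, add_comm]

theorem homotopyDefect_homotopyAlong (hlie : ∀ u, lie u u = 0) (hb : ContDiff ℝ 2 b)
    (hα₀ : ContDiff ℝ 1 α₀) (p : ℝ × ℝ) :
    homotopyDefect lie (homotopyAlong lie w b α₀) (fun p => b p.2 • w) p = 0 := by
  obtain ⟨e, t⟩ := p
  have hα : ContDiff ℝ 1 (homotopyAlong lie w b α₀) :=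
    contDiff_homotopyAlong (by simpa [one_add_one_eq_two] using hb) hα₀
  have hE := (hasDerivAt_partialE (hα.differentiable one_ne_zero (e, t))).unique
    (hasDerivAt_homotopyAlong hlie e t)
  rw [homotopyDefect, hE, partialT_smul_const (hb.differentiable two_ne_zero t), map_smul]
  abel

end Homotopy

section Energy

variable {G : Type*} [NormedAddCommGroup G] [InnerProductSpace ℝ G]

/-- The energy `E(ε) = ½ ∫₀¹ ⟪α(ε, t), α(ε, t)⟫ dt` of the curves `α(ε, ·)`. -/
noncomputable def energy (α : ℝ × ℝ → G) (e : ℝ) : ℝ :=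
  (1 / 2 : ℝ) * ∫ t in (0 : ℝ)..1, ⟪α (e, t), α (e, t)⟫_ℝ

/-- The Euler–Poincaré functional `w ↦ ⟪γ' t, w⟫ - ⟪γ t, [γ t, w]⟫` of a curve `γ`, the integrand
of the first variation of the energy. It is written without the Levi-Civita product `D`, so that
its continuity in `t` is that of the bracket. -/
noncomputable def eulerPoincare (lie : G →L[ℝ] G →L[ℝ] G) (γ : ℝ → G) (t : ℝ) : G →L[ℝ] ℝ :=
  innerSL ℝ (deriv γ t) - (innerSL ℝ (γ t)).comp (lie (γ t))

variable {lie : G →L[ℝ] G →L[ℝ] G} {α β : ℝ × ℝ → G}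

theorem eulerPoincare_apply (γ : ℝ → G) (t : ℝ) (w : G) :
    eulerPoincare lie γ t w = ⟪deriv γ t, w⟫_ℝ - ⟪γ t, lie (γ t) w⟫_ℝ := rfl

theorem continuous_eulerPoincare {γ : ℝ → G} (hγ : ContDiff ℝ 1 γ) :
    Continuous (eulerPoincare lie γ) := by
  have hγc : Continuous γ := hγ.continuous
  unfold eulerPoincare
  fun_prop

theorem inner_lie_eq_neg_inner_of_koszul (hlie : ∀ u, lie u u = 0) {D : G → G → G}
    (hD : ∀ u v w : G,
      2 * ⟪D u v, w⟫_ℝ = ⟪lie u v, w⟫_ℝ + ⟪lie w u, v⟫_ℝ + ⟪lie w v, u⟫_ℝ) (u w : G) :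
    ⟪u, lie u w⟫_ℝ = -⟪D u u, w⟫_ℝ := by
  have hskew : lie w u = -lie u w := by
    have hsum := hlie (w + u)
    simp only [map_add, add_apply, hlie, zero_add, add_zero] at hsum
    rwa [add_comm, add_eq_zero_iff_eq_neg] at hsum
  have hkoszul := hD u u w
  rw [hlie, hskew, inner_zero_left, inner_neg_left, real_inner_comm u] at hkoszul
  linarith

theorem eulerPoincare_eq_zero_iff_of_koszul (hlie : ∀ u, lie u u = 0) {D : G → G → G}
    (hD : ∀ u v w : G,
      2 * ⟪D u v, w⟫_ℝ = ⟪lie u v, w⟫_ℝ + ⟪lie w u, v⟫_ℝ + ⟪lie w v, u⟫_ℝ) (γ : ℝ → G) (t : ℝ) :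
    eulerPoincare lie γ t = 0 ↔ deriv γ t = -D (γ t) (γ t) := by
  have hpair : eulerPoincare lie γ t = innerSL ℝ (deriv γ t + D (γ t) (γ t)) := by
    ext w
    rw [eulerPoincare_apply, inner_lie_eq_neg_inner_of_koszul hlie hD, innerSL_apply_apply,
      inner_add_left, sub_neg_eq_add]
  rw [hpair, ← add_eq_zero_iff_eq_neg, ← norm_eq_zero, innerSL_apply_norm, norm_eq_zero]

theorem hasDerivAt_energy (hα : ContDiff ℝ 1 α) (e : ℝ) :
    HasDerivAt (energy α) (∫ t in (0 : ℝ)..1, ⟪α (e, t), partialE α (e, t)⟫_ℝ) e := by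
  have hsq : ContDiff ℝ 1 fun p => ⟪α p, α p⟫_ℝ := hα.inner ℝ hα
  have hpartial (t : ℝ) : partialE (fun p => ⟪α p, α p⟫_ℝ) (e, t) =
      2 * ⟪α (e, t), partialE α (e, t)⟫_ℝ := by
    have hαt := hasDerivAt_partialE (hα.differentiable one_ne_zero (e, t))
    rw [(hasDerivAt_partialE (hsq.differentiable one_ne_zero (e, t))).unique (hαt.inner ℝ hαt),
      real_inner_comm, two_mul]
  refine ((hasDerivAt_integral_partialE hsq 0 1 e).const_mul (1 / 2)).congr_deriv ?_
  simp only [hpartial, intervalIntegral.integral_const_mul]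
  ring

theorem integral_inner_deriv_add_lie {γ δ : ℝ → G} (hγ : ContDiff ℝ 1 γ) (hδ : ContDiff ℝ 1 δ)
    {a b : ℝ} (hδa : δ a = 0) (hδb : δ b = 0) :
    ∫ t in a..b, ⟪γ t, deriv δ t + lie (γ t) (δ t)⟫_ℝ =
      -∫ t in a..b, eulerPoincare lie γ t (δ t) := by
  have hγc : Continuous γ := hγ.continuous
  have hδc : Continuous δ := hδ.continuous
  have hlie : IntervalIntegrable (fun t => ⟪γ t, lie (γ t) (δ t)⟫_ℝ) volume a b :=
    Continuous.intervalIntegrable (by fun_prop) a b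
  simp only [eulerPoincare_apply, inner_add_right]
  rw [intervalIntegral.integral_add (Continuous.intervalIntegrable (by fun_prop) a b) hlie,
    intervalIntegral.integral_sub (Continuous.intervalIntegrable (by fun_prop) a b) hlie,
    integral_inner_deriv_eq_deriv_inner hγ hδ, hδa, hδb, inner_zero_right, inner_zero_right]
  ring

theorem hasDerivAt_energy_of_homotopy (hα : ContDiff ℝ 1 α) (hβ : ContDiff ℝ 1 β) {e : ℝ}
    (hβ₀ : β (e, 0) = 0) (hβ₁ : β (e, 1) = 0)
    (hΔ : ∀ t ∈ Icc (0 : ℝ) 1, homotopyDefect lie α β (e, t) = 0) :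
    HasDerivAt (energy α)
      (-∫ t in (0 : ℝ)..1, eulerPoincare lie (fun t => α (e, t)) t (β (e, t))) e := by
  have hγ : ContDiff ℝ 1 fun t => α (e, t) := hα.comp (contDiff_prodMk_right e)
  have hδ : ContDiff ℝ 1 fun t => β (e, t) := hβ.comp (contDiff_prodMk_right e)
  refine (hasDerivAt_energy hα e).congr_deriv ?_
  rw [← integral_inner_deriv_add_lie hγ hδ hβ₀ hβ₁]
  refine intervalIntegral.integral_congr fun t ht => ?_
  rw [uIcc_of_le zero_le_one] at ht
  have hT : deriv (fun t => β (e, t)) t = partialT β (e, t) :=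
    (hasDerivAt_partialT (hβ.differentiable one_ne_zero (e, t))).deriv
  simp only [hT, partialE_eq_of_homotopyDefect_eq_zero (hΔ t ht)]

end Energy

section CriticalPoints

variable {G : Type*} [NormedAddCommGroup G] [InnerProductSpace ℝ G] {lie : G →L[ℝ] G →L[ℝ] G}
  {α₀ : ℝ → G} {n : ℕ∞}

/-- Critical points of the energy among `C^n` homotopies with fixed end-points: the energy is
stationary at `ε = 0` along every `C^n` homotopy `α` starting at `α₀` that has a `C^n` transverse
variation `β` vanishing at `t = 0` and `t = 1`. Maps on
`ℝ × [0, 1]` are encoded as maps on `ℝ × ℝ`, with `Δ(α, β) = 0` required only over `[0, 1]`. -/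
def IsEnergyCritical (lie : G →L[ℝ] G →L[ℝ] G) (n : ℕ∞) (α₀ : ℝ → G) : Prop :=
  ∀ α β : ℝ × ℝ → G, ContDiff ℝ n α → ContDiff ℝ n β →
    (∀ t : ℝ, α (0, t) = α₀ t) →
    (∀ ε : ℝ, β (ε, 0) = 0 ∧ β (ε, 1) = 0) →
    (∀ p : ℝ × ℝ, p.2 ∈ Icc (0 : ℝ) 1 → homotopyDefect lie α β p = 0) →
    HasDerivAt (energy α) 0 0

theorem IsEnergyCritical.of_eulerPoincare_eq_zero (hn : 1 ≤ n)
    (h : ∀ t ∈ Icc (0 : ℝ) 1, eulerPoincare lie α₀ t = 0) : IsEnergyCritical lie n α₀ := by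
  intro α β hα hβ hα₀ hend hΔ
  have hn' : (1 : WithTop ℕ∞) ≤ n := mod_cast hn
  refine (hasDerivAt_energy_of_homotopy (hα.of_le hn') (hβ.of_le hn') (hend 0).1 (hend 0).2
    fun t => hΔ (0, t)).congr_deriv ?_
  rw [funext hα₀, neg_eq_zero]
  refine intervalIntegral.integral_zero_ae (.of_forall fun t ht => ?_)
  rw [uIoc_of_le zero_le_one] at ht
  rw [h t (Ioc_subset_Icc_self ht), zero_apply]

theorem IsEnergyCritical.eulerPoincare_eq_zero [CompleteSpace G] (hcrit : IsEnergyCritical lie n α₀)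
    (hlie : ∀ u, lie u u = 0) (hn : 1 ≤ n) (hα₀ : ContDiff ℝ n α₀) {t : ℝ}
    (ht : t ∈ Icc (0 : ℝ) 1) : eulerPoincare lie α₀ t = 0 := by
  have hn' : (1 : WithTop ℕ∞) ≤ n := mod_cast hn
  have hα₀' : ContDiff ℝ 1 α₀ := hα₀.of_le hn'
  ext w
  have hcont : Continuous fun t => eulerPoincare lie α₀ t w :=
    (continuous_eulerPoincare hα₀').clm_apply continuous_const
  refine eqOn_zero_of_integral_contDiff_smul_eq_zero zero_lt_one hcont.continuousOn
    (fun b hb hb₀ hb₁ => ?_) ht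
  have hα : ContDiff ℝ n (homotopyAlong lie w b α₀) :=
    contDiff_homotopyAlong (hb.of_le (mod_cast le_top)) hα₀
  have hβ : ContDiff ℝ n fun p : ℝ × ℝ => b p.2 • w :=
    ((hb.of_le (mod_cast le_top)).comp contDiff_snd).smul contDiff_const
  have hΔ := homotopyDefect_homotopyAlong (w := w) hlie (contDiff_infty.1 hb 2) hα₀'
  have hstationary : HasDerivAt (energy (homotopyAlong lie w b α₀)) 0 0 :=
    hcrit _ _ hα hβ homotopyAlong_zero_left (by simp [hb₀, hb₁]) fun p _ => hΔ p
  have hvariation := hasDerivAt_energy_of_homotopy (e := 0) (hα.of_le hn') (hβ.of_le hn')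
    (by simp [hb₀]) (by simp [hb₁]) fun t _ => hΔ (0, t)
  simpa [homotopyAlong_zero_left] using hvariation.unique hstationary

theorem geodesic_iff_critical_point_of_energy_general [CompleteSpace G]
    (hlie : ∀ u, lie u u = 0) {D : G → G → G}
    (hD : ∀ u v w : G,
      2 * ⟪D u v, w⟫_ℝ = ⟪lie u v, w⟫_ℝ + ⟪lie w u, v⟫_ℝ + ⟪lie w v, u⟫_ℝ)
    (hn : 1 ≤ n) (hα₀ : ContDiff ℝ n α₀) :
    (∀ t ∈ Icc (0 : ℝ) 1, deriv α₀ t = -D (α₀ t) (α₀ t)) ↔ IsEnergyCritical lie n α₀ := by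
  simp only [← eulerPoincare_eq_zero_iff_of_koszul hlie hD]
  exact ⟨.of_eulerPoincare_eq_zero hn, fun hcrit _ => hcrit.eulerPoincare_eq_zero hlie hn hα₀⟩

end CriticalPoints

/-- A smooth curve `α₀ : [0,1] → 𝔤` is a geodesic
(`α₀' t = -D (α₀ t) (α₀ t)`) if and only if it is an `h`-critical point of the energy:
for every pair of smooth maps `α β : ℝ × [0,1] → 𝔤` with `α(0,·) = α₀`,
`β(ε,0) = β(ε,1) = 0` for all `ε` and `Δ(α,β) = 0`, the energy
`E ε = ½ ∫₀¹ ⟪α(ε,t), α(ε,t)⟫ dt` satisfies `E'(0) = 0`. -/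
theorem geodesic_iff_critical_point_of_energy
    {G : Type*} [NormedAddCommGroup G] [InnerProductSpace ℝ G] [FiniteDimensional ℝ G]
    (lie : G →ₗ[ℝ] G →ₗ[ℝ] G)
    (hanti : ∀ u : G, lie u u = 0)
    (hjac : ∀ u v w : G, lie u (lie v w) = lie (lie u v) w + lie v (lie u w))
    (D : G →ₗ[ℝ] G →ₗ[ℝ] G)
    (hD : ∀ u v w : G,
      2 * ⟪D u v, w⟫_ℝ = ⟪lie u v, w⟫_ℝ + ⟪lie w u, v⟫_ℝ + ⟪lie w v, u⟫_ℝ)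
    (α₀ : ℝ → G) (hα₀ : ContDiff ℝ (⊤ : ℕ∞) α₀) :
    (∀ t ∈ Set.Icc (0 : ℝ) 1, deriv α₀ t = -(D (α₀ t) (α₀ t))) ↔
      (∀ α β : ℝ × ℝ → G, ContDiff ℝ (⊤ : ℕ∞) α → ContDiff ℝ (⊤ : ℕ∞) β →
        (∀ t : ℝ, α (0, t) = α₀ t) →
        (∀ ε : ℝ, β (ε, 0) = 0 ∧ β (ε, 1) = 0) →
        (∀ p : ℝ × ℝ, p.2 ∈ Set.Icc (0 : ℝ) 1 →
          partialT β p - partialE α p + lie (α p) (β p) = 0) →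
        HasDerivAt (fun e : ℝ => (1 / 2 : ℝ) * ∫ t in (0 : ℝ)..1, ⟪α (e, t), α (e, t)⟫_ℝ)
          0 0) := by
  have : CompleteSpace G := FiniteDimensional.complete ℝ G
  exact geodesic_iff_critical_point_of_energy_general (lie := lie.toContinuousBilinearMap)
    hanti (D := fun u v => D u v) hD le_top hα₀
end
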